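/- Let P and Q be monomial prime ideals of S = K[x_1,...,x_n] generated by disjoint sets of variables with P + Q = (x_1,...,x_n) and ht(P) = r. Then depth_S(P ∩ Q) = 2 and sdepth_S(P ∩ Q) ≥ ⌈r/2⌉ + ⌈(n−r)/2⌉ ≥ 2. -/

import Mathlib

open MvPolynomial

/-- The depth of a module `M` with respect to an ideal `I`: the supremum of
lengths of `M`-regular sequences with entries in `I`. -/
noncomputable def moduleDepth (R : Type*) [CommRing R] (I : Ideal R)
    (M : Type*) [AddCommGroup M] [Module R M] : ℕ :=
  sSup {k | ∃ rs : List R, rs.length = k ∧ (∀ r ∈ rs, r ∈ I) ∧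
    RingTheory.Sequence.IsRegular M rs}

/-- The Stanley space `u·K[Z]`: the `K`-span of all monomials `u·v` with
`v` a monomial in the variables of `Z`. -/
noncomputable def stanleySpace {n : ℕ} (K : Type*) [Field K] (d : Fin n →₀ ℕ)
    (Z : Finset (Fin n)) : Submodule K (MvPolynomial (Fin n) K) :=
  Submodule.span K {f | ∃ e : Fin n →₀ ℕ, (∀ i, e i ≠ 0 → i ∈ Z) ∧
    f = monomial (d + e) (1 : K)}

/-- A Stanley decomposition of a monomial ideal `I`: a finite family of Stanley
spaces `uᵢ·K[Zᵢ]`, with each `uᵢ ∈ I`, which are independent and whose (direct)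
sum is `I` as a `K`-vector space. -/
structure StanleyDecomp {n : ℕ} (K : Type*) [Field K]
    (I : Ideal (MvPolynomial (Fin n) K)) where
  m : ℕ
  u : Fin m → (Fin n →₀ ℕ)
  Z : Fin m → Finset (Fin n)
  mem : ∀ i, monomial (u i) (1 : K) ∈ I
  indep : iSupIndep fun i => stanleySpace K (u i) (Z i)
  total : (⨆ i, stanleySpace K (u i) (Z i)) = Submodule.restrictScalars K I

/-- The Stanley depth of a monomial ideal: the largest `k` such that `I` admits a
Stanley decomposition all of whose Stanley spaces use at least `k` variables. -/
noncomputable def sdepth {n : ℕ} {K : Type*} [Field K]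
    (I : Ideal (MvPolynomial (Fin n) K)) : ℕ :=
  sSup {k | ∃ D : StanleyDecomp K I, ∀ i, k ≤ (D.Z i).card}

/-- `I` is a monomial ideal if it is generated by monomials. -/
def IsMonomialIdeal {n : ℕ} {K : Type*} [Field K]
    (I : Ideal (MvPolynomial (Fin n) K)) : Prop :=
  ∃ G : Set (Fin n →₀ ℕ), I = Ideal.span ((fun d => monomial d (1 : K)) '' G)

/-- The monomial prime ideal generated by the variables in `A`. -/
noncomputable def varIdeal {n : ℕ} (K : Type*) [Field K] (A : Finset (Fin n)) :
    Ideal (MvPolynomial (Fin n) K) :=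
  Ideal.span ((fun i => (X i : MvPolynomial (Fin n) K)) '' ↑A)

/-- The graded maximal ideal `(x_1, …, x_n)`. -/
noncomputable def maxIdeal (n : ℕ) (K : Type*) [Field K] :
    Ideal (MvPolynomial (Fin n) K) :=
  varIdeal K Finset.univ

/-!
**Stanley depth.** A partition into intervals `[S, T]` of the family of those `S` that meet both
`A` and its complement gives a Stanley decomposition of `P ∩ Q` with spaces `x_S K[T]`, and such
partitions are products of partitions of the nonempty subsets of `A` and of `Aᶜ`. To partition the
nonempty subsets of an `m`-element set, number the elements and colour them alternately. Send `S`
to the sequence whose `i`-th term is the colour of the first element of `S` that is at least `i`,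
with the default colour past the last element chosen opposite to the initial term. The sets with a
given sequence form an interval: they contain every position where the sequence changes, and only
positions where it agrees with the colouring. As the colours alternate, one of any two consecutive
positions agrees, so the top of the interval has at least `⌈m/2⌉` elements.

**Depth.** The sequence `x_a + x_b, x_a` with `a ∈ A` and `b ∉ A` is regular on `P ∩ Q`. Conversely
let `f₁, f₂, f₃ ∈ P + Q` be a regular sequence on `P ∩ Q` and write `fᵢ = pᵢ + qᵢ`. Regularity of
`f₃` modulo `f₁, f₂` corrects `(q₁, q₂)` by elements of `P ∩ Q` to a vector proportional to
`(f₁, f₂)`. As the ring is integrally closed, `f₁, f₂` is regular on it too, so this vector equals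
`s (f₁, f₂)` for a ring element `s`. Then `s ∈ Q` and `1 - s ∈ P`, contradicting `P + Q ≠ (1)`.
-/

open Finset RingTheory.Sequence

/-- A partition of a subset `s` of a preorder into nonempty closed intervals, each recorded as
the pair of its endpoints. For `s` a family of finsets these are the combinatorial counterparts
of the Stanley decompositions of squarefree monomial ideals. -/
structure IsIntervalPartition {P : Type*} [Preorder P] (s : Set P) (𝓘 : Set (P × P)) : Prop where
  fst_le_snd : ∀ I ∈ 𝓘, I.1 ≤ I.2
  Icc_subset : ∀ I ∈ 𝓘, Set.Icc I.1 I.2 ⊆ s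
  existsUnique : ∀ x ∈ s, ∃! I, I ∈ 𝓘 ∧ x ∈ Set.Icc I.1 I.2

namespace IsIntervalPartition

variable {P Q : Type*} [Preorder P] [Preorder Q] {s : Set P} {t : Set Q}
  {𝓘 : Set (P × P)} {𝓙 : Set (Q × Q)}

theorem eq_of_mem_Icc (h : IsIntervalPartition s 𝓘) {I J : P × P} (hI : I ∈ 𝓘) (hJ : J ∈ 𝓘)
    {x : P} (hxI : x ∈ Set.Icc I.1 I.2) (hxJ : x ∈ Set.Icc J.1 J.2) : I = J :=
  (h.existsUnique x (h.Icc_subset I hI hxI)).unique ⟨hI, hxI⟩ ⟨hJ, hxJ⟩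

theorem preimage (h : IsIntervalPartition t 𝓙) (e : P ≃o Q) :
    IsIntervalPartition (e ⁻¹' t) (Prod.map e e ⁻¹' 𝓙) where
  fst_le_snd I hI := e.le_iff_le.1 (h.fst_le_snd _ hI)
  Icc_subset I hI x hx := h.Icc_subset _ hI ⟨e.monotone hx.1, e.monotone hx.2⟩
  existsUnique x hx := by
    obtain ⟨J, ⟨hJ, hxJ⟩, huniq⟩ := h.existsUnique (e x) hx
    refine ⟨Prod.map e.symm e.symm J, ⟨?_, ?_⟩, ?_⟩
    · simpa [Prod.map] using hJ
    · exact ⟨(e.symm_apply_le).2 hxJ.1, (e.le_symm_apply).2 hxJ.2⟩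
    · rintro I ⟨hI, hxI⟩
      rw [← huniq _ ⟨hI, e.monotone hxI.1, e.monotone hxI.2⟩]
      simp [Prod.map]

theorem prod (h : IsIntervalPartition s 𝓘) (h' : IsIntervalPartition t 𝓙) :
    IsIntervalPartition (s ×ˢ t) (Equiv.prodProdProdComm P Q P Q ⁻¹' 𝓘 ×ˢ 𝓙) where
  fst_le_snd I hI := ⟨h.fst_le_snd _ hI.1, h'.fst_le_snd _ hI.2⟩
  Icc_subset I hI x hx :=
    ⟨h.Icc_subset _ hI.1 ⟨hx.1.1, hx.2.1⟩, h'.Icc_subset _ hI.2 ⟨hx.1.2, hx.2.2⟩⟩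
  existsUnique x hx := by
    obtain ⟨I, ⟨hI, hxI⟩, hIuniq⟩ := h.existsUnique x.1 hx.1
    obtain ⟨J, ⟨hJ, hxJ⟩, hJuniq⟩ := h'.existsUnique x.2 hx.2
    refine ⟨((I.1, J.1), (I.2, J.2)), ⟨⟨hI, hJ⟩, ⟨hxI.1, hxJ.1⟩, ⟨hxI.2, hxJ.2⟩⟩, ?_⟩
    rintro ⟨⟨a, b⟩, ⟨c, d⟩⟩ ⟨⟨hac, hbd⟩, ⟨hax, hbx⟩, ⟨hxc, hxd⟩⟩
    have hacI := hIuniq (a, c) ⟨hac, hax, hxc⟩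
    have hbdJ := hJuniq (b, d) ⟨hbd, hbx, hxd⟩
    simp [← hacI, ← hbdJ]

end IsIntervalPartition

section Colouring

variable {n : ℕ} {c : Fin n → Bool} {ν μ : Fin (n + 1) → Bool} {S : Finset (Fin n)}

/-- The positions at which the colour sequence `ν` changes. -/
def colourChanges (ν : Fin (n + 1) → Bool) : Finset (Fin n) :=
  {i | ν i.castSucc ≠ ν i.succ}

/-- The positions at which the colour sequence `ν` agrees with the colouring `c`. -/
def colourAgreements (c : Fin n → Bool) (ν : Fin (n + 1) → Bool) : Finset (Fin n) :=
  {i | ν i.castSucc = c i}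

/-- `S` lies in the interval attached to `ν` iff `ν i` is the colour of the first element of `S`
that is at least `i`, with `ν (Fin.last n)` as the default. -/
theorem mem_Icc_colour_iff :
    S ∈ Set.Icc (colourChanges ν) (colourAgreements c ν) ↔
      ∀ i, ν i.castSucc = if i ∈ S then c i else ν i.succ := by
  simp only [Set.mem_Icc, subset_iff, colourChanges, colourAgreements,
    mem_filter_univ, ← forall_and]
  refine forall_congr' fun i => ?_
  split_ifs with hi <;> simp [hi]

theorem exists_mem_Icc_colour (c : Fin n → Bool) (S : Finset (Fin n)) (p : Bool) :
    ∃ ν : Fin (n + 1) → Bool, ν (Fin.last n) = p ∧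
      S ∈ Set.Icc (colourChanges ν) (colourAgreements c ν) :=
  ⟨fun j => Fin.reverseInduction (motive := fun _ => Bool) p
      (fun i v => if i ∈ S then c i else v) j,
    by simp, mem_Icc_colour_iff.2 fun i => by simp⟩

theorem eq_of_mem_Icc_colour (hν : S ∈ Set.Icc (colourChanges ν) (colourAgreements c ν))
    (hμ : S ∈ Set.Icc (colourChanges μ) (colourAgreements c μ))
    (hlast : ν (Fin.last n) = μ (Fin.last n)) : ν = μ := by
  rw [mem_Icc_colour_iff] at hν hμ
  ext1 j
  induction j using Fin.reverseInduction with
  | last => exact hlast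
  | cast i ih => rw [hν, hμ, ih]

theorem eq_empty_of_mem_Icc_colour (hν : S ∈ Set.Icc (colourChanges ν) (colourAgreements c ν))
    (hμ : S ∈ Set.Icc (colourChanges μ) (colourAgreements c μ)) (hzero : ν 0 ≠ μ 0) :
    S = ∅ := by
  rw [mem_Icc_colour_iff] at hν hμ
  have notMem_of_ne : ∀ i : Fin n, ν i.castSucc ≠ μ i.castSucc → i ∉ S := fun i hne hi =>
    hne (by rw [hν, hμ, if_pos hi, if_pos hi])
  have ne : ∀ j, ν j ≠ μ j := by
    intro j
    induction j using Fin.induction with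
    | zero => exact hzero
    | succ i ih =>
      have hi := notMem_of_ne i ih
      rwa [hν, hμ, if_neg hi, if_neg hi] at ih
  exact eq_empty_of_forall_notMem fun i => notMem_of_ne i (ne _)

theorem colourChanges_nonempty (hν : ν 0 ≠ ν (Fin.last n)) : (colourChanges ν).Nonempty := by
  by_contra hempty
  have const : ∀ j, ν j = ν 0 := by
    intro j
    induction j using Fin.induction with
    | zero => rfl
    | succ i ih =>
      have : i ∉ colourChanges ν := by simp [not_nonempty_iff_eq_empty.1 hempty]
      simpa [colourChanges, ih, eq_comm] using this
  exact hν (const _).symm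

/-- A nonempty `S` determines the value at `0` of its colour sequence whatever the default is, so
exactly one of the two defaults is antiperiodic. -/
theorem exists_antiperiodic_mem_Icc_colour (c : Fin n → Bool) (hS : S.Nonempty) :
    ∃ ν : Fin (n + 1) → Bool, ν 0 ≠ ν (Fin.last n) ∧
      S ∈ Set.Icc (colourChanges ν) (colourAgreements c ν) := by
  obtain ⟨ν, hνlast, hν⟩ := exists_mem_Icc_colour c S true
  obtain ⟨μ, hμlast, hμ⟩ := exists_mem_Icc_colour c S false
  have hzero : ν 0 = μ 0 := not_ne_iff.1 fun h => hS.ne_empty (eq_empty_of_mem_Icc_colour hν hμ h)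
  cases hν0 : ν 0
  · exact ⟨ν, by simp [hν0, hνlast], hν⟩
  · exact ⟨μ, by simp [← hzero, hν0, hμlast], hμ⟩

theorem isIntervalPartition_nonempty_colour (c : Fin n → Bool) :
    IsIntervalPartition {S : Finset (Fin n) | S.Nonempty}
      ((fun ν => (colourChanges ν, colourAgreements c ν)) ''
        {ν | ν 0 ≠ ν (Fin.last n) ∧ colourChanges ν ⊆ colourAgreements c ν}) where
  fst_le_snd := by
    rintro _ ⟨ν, hν, rfl⟩
    exact hν.2
  Icc_subset := by
    rintro _ ⟨ν, hν, rfl⟩ S hS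
    exact (colourChanges_nonempty hν.1).mono hS.1
  existsUnique S hS := by
    obtain ⟨ν, hνanti, hν⟩ := exists_antiperiodic_mem_Icc_colour c hS
    refine ⟨_, ⟨⟨ν, ⟨hνanti, hν.1.trans hν.2⟩, rfl⟩, hν⟩, ?_⟩
    rintro _ ⟨⟨μ, ⟨hμanti, -⟩, rfl⟩, hμ⟩
    have hzero : μ 0 = ν 0 :=
      not_ne_iff.1 fun h => hS.ne_empty (eq_empty_of_mem_Icc_colour hμ hν h)
    have hlast : μ (Fin.last n) = ν (Fin.last n) := by
      rw [Bool.eq_not.2 hμanti.symm, Bool.eq_not.2 hνanti.symm, hzero]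
    rw [eq_of_mem_Icc_colour hμ hν hlast]

/-- Two consecutive terms of `ν` never both disagree with the alternating colouring, and for odd
`n` antiperiodicity lets this count close up cyclically. -/
theorem le_card_colourAgreements_even (hanti : ν 0 ≠ ν (Fin.last n))
    (hν : colourChanges ν ⊆ colourAgreements (fun i => decide (Even (i : ℕ))) ν) :
    (n + 1) / 2 ≤ #(colourAgreements (fun i => decide (Even (i : ℕ))) ν) := by
  let φ : Fin (n + 1) → ℕ := fun j => if ν j = decide (Even (j : ℕ)) then 1 else 0
  have card_eq : #(colourAgreements (fun i => decide (Even (i : ℕ))) ν) =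
      ∑ i : Fin n, φ i.castSucc := by
    simp [colourAgreements, φ]
  have one_le (i : Fin n) : 1 ≤ φ i.castSucc + φ i.succ := by
    have hi := @hν i
    simp only [colourChanges, colourAgreements, mem_filter_univ] at hi
    by_cases hagree : ν i.castSucc = decide (Even (i : ℕ))
    · simp [φ, hagree]
    · have hsucc : ν i.succ = ν i.castSucc := not_ne_iff.1 fun h => hagree (hi h.symm)
      have hsucc_agree : ν i.succ = decide (Even ((i : ℕ) + 1)) := by
        simpa only [hsucc, Nat.even_add_one, decide_not] using Bool.eq_not.2 hagree
      simp [φ, hsucc_agree]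
  have le_sum : n ≤ ∑ i : Fin n, φ i.castSucc + ∑ i : Fin n, φ i.succ := by
    simpa [sum_add_distrib] using sum_le_sum fun i (_ : i ∈ univ) => one_le i
  have sum_shift : ∑ i : Fin n, φ i.castSucc + φ (Fin.last n) = φ 0 + ∑ i : Fin n, φ i.succ :=
    (Fin.sum_univ_castSucc φ).symm.trans (Fin.sum_univ_succ φ)
  have last_le : φ (Fin.last n) ≤ 1 := by simp only [φ]; split_ifs <;> simp
  rcases Nat.even_or_odd' n with ⟨k, hk | hk⟩
  · omega
  · have last_eq : φ (Fin.last n) = φ 0 := by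
      have hodd : ¬ Even n := Nat.not_even_iff_odd.2 ⟨k, hk⟩
      simp only [φ, Bool.eq_not.2 hanti, Fin.val_last, Fin.val_zero, hodd]
      cases ν (Fin.last n) <;> simp
    omega

end Colouring

section FinsetIntervals

/-- An equivalence of types as an isomorphism of their finset lattices. -/
def finsetOrderIso {α β : Type*} (e : α ≃ β) : Finset α ≃o Finset β where
  toEquiv := e.finsetCongr
  map_rel_iff' := map_subset_map

theorem mem_finsetOrderIso {α β : Type*} {e : α ≃ β} {S : Finset α} {b : β} :
    b ∈ finsetOrderIso e S ↔ e.symm b ∈ S :=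
  mem_map_equiv

theorem exists_isIntervalPartition_nonempty (α : Type*) [Fintype α] :
    ∃ 𝓘, IsIntervalPartition {S : Finset α | S.Nonempty} 𝓘 ∧
      ∀ I ∈ 𝓘, (Fintype.card α + 1) / 2 ≤ #I.2 := by
  let e := finsetOrderIso (Fintype.equivFin α)
  have nonempty_iff : e ⁻¹' {S | S.Nonempty} = {S | S.Nonempty} := by
    ext S
    exact map_nonempty
  refine ⟨_, nonempty_iff ▸
    (isIntervalPartition_nonempty_colour fun i => decide (Even (i : ℕ))).preimage e, ?_⟩
  rintro I ⟨ν, ⟨hanti, hν⟩, hI⟩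
  have card_eq : #(e I.2) = #I.2 := card_map _
  rw [← card_eq, ← show colourAgreements _ ν = e I.2 from congrArg Prod.snd hI]
  exact le_card_colourAgreements_even hanti hν

variable {α : Type*} [DecidableEq α] (A : Finset α)

/-- The splitting of a finset into its parts inside and outside `A`, as an isomorphism of
lattices. -/
def finsetSplit : Finset α ≃o Finset {i // i ∈ A} × Finset {i // i ∉ A} :=
  (finsetOrderIso (Equiv.sumCompl (· ∈ A)).symm).trans Finset.sumEquiv

theorem card_finsetSplit (S : Finset α) :
    #(finsetSplit A S).1 + #(finsetSplit A S).2 = #S :=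
  (card_toLeft_add_card_toRight).trans (card_map _)

theorem finsetSplit_fst_nonempty {S : Finset α} :
    (finsetSplit A S).1.Nonempty ↔ ∃ i ∈ S, i ∈ A := by
  simp [finsetSplit, mem_finsetOrderIso, Finset.Nonempty, and_comm]

theorem finsetSplit_snd_nonempty {S : Finset α} :
    (finsetSplit A S).2.Nonempty ↔ ∃ i ∈ S, i ∉ A := by
  simp [finsetSplit, mem_finsetOrderIso, Finset.Nonempty, and_comm]

theorem exists_isIntervalPartition_meets_both [Fintype α] :
    ∃ 𝓘, IsIntervalPartition {S : Finset α | (∃ i ∈ S, i ∈ A) ∧ ∃ i ∈ S, i ∉ A} 𝓘 ∧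
      ∀ I ∈ 𝓘, (#A + 1) / 2 + (#Aᶜ + 1) / 2 ≤ #I.2 := by
  obtain ⟨𝓘, h𝓘, hcard⟩ := exists_isIntervalPartition_nonempty {i // i ∈ A}
  obtain ⟨𝓙, h𝓙, hcard'⟩ := exists_isIntervalPartition_nonempty {i // i ∉ A}
  have meets_iff : finsetSplit A ⁻¹' ({S | S.Nonempty} ×ˢ {S | S.Nonempty}) =
      {S : Finset α | (∃ i ∈ S, i ∈ A) ∧ ∃ i ∈ S, i ∉ A} := by
    ext S
    exact and_congr (finsetSplit_fst_nonempty A) (finsetSplit_snd_nonempty A)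
  refine ⟨_, meets_iff ▸ (h𝓘.prod h𝓙).preimage (finsetSplit A), ?_⟩
  rintro I ⟨hI, hI'⟩
  rw [← card_finsetSplit A I.2, card_compl, ← Fintype.card_coe A, ← Fintype.card_subtype_compl]
  exact add_le_add (hcard _ hI) (hcard' _ hI')

end FinsetIntervals

section RestrictSupport

variable {σ R ι : Type*} [CommSemiring R]

theorem iSup_restrictSupport (s : ι → Set (σ →₀ ℕ)) :
    ⨆ i, restrictSupport R (s i) = restrictSupport R (⋃ i, s i) := by
  simp only [restrictSupport_eq_span, Set.image_iUnion, Submodule.span_iUnion]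

theorem disjoint_restrictSupport {s t : Set (σ →₀ ℕ)} (h : Disjoint s t) :
    Disjoint (restrictSupport R s) (restrictSupport R t) := by
  rw [Submodule.disjoint_def]
  intro f hs ht
  rw [mem_restrictSupport_iff] at hs ht
  simpa using h hs ht

theorem iSupIndep_restrictSupport {s : ι → Set (σ →₀ ℕ)}
    (h : Pairwise (Function.onFun Disjoint s)) :
    iSupIndep fun i => restrictSupport R (s i) := by
  intro i
  refine (disjoint_restrictSupport (R := R) disjoint_compl_right).mono_right
    (iSup₂_le fun j hj => restrictSupport_mono R ?_)
  exact Set.subset_compl_iff_disjoint_right.2 (h hj)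

end RestrictSupport

section Stanley

variable {n k : ℕ} {K : Type*} [Field K] {I : Ideal (MvPolynomial (Fin n) K)}
  {s : Set (Finset (Fin n))} {𝓘 : Set (Finset (Fin n) × Finset (Fin n))}

/-- The exponent vector of the squarefree monomial `∏ i ∈ S, x_i`. -/
noncomputable def squarefreeExponent (S : Finset (Fin n)) : Fin n →₀ ℕ :=
  Finsupp.indicator S fun _ _ => 1

theorem squarefreeExponent_apply (S : Finset (Fin n)) (i : Fin n) :
    squarefreeExponent S i = if i ∈ S then 1 else 0 := by
  simp [squarefreeExponent, Finsupp.indicator_apply]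

theorem support_squarefreeExponent (S : Finset (Fin n)) : (squarefreeExponent S).support = S := by
  ext i
  simp [squarefreeExponent_apply]

theorem squarefreeExponent_le_iff {S : Finset (Fin n)} {d : Fin n →₀ ℕ} :
    squarefreeExponent S ≤ d ↔ S ⊆ d.support := by
  refine forall_congr' fun i => ?_
  simp only [squarefreeExponent_apply, Finsupp.mem_support_iff]
  split_ifs with hi <;> simp [hi, Nat.one_le_iff_ne_zero]

theorem stanleySpace_squarefreeExponent {S T : Finset (Fin n)} (hST : S ⊆ T) :
    stanleySpace K (squarefreeExponent S) T =
      restrictSupport K {d | d.support ∈ Set.Icc S T} := by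
  rw [restrictSupport_eq_span, stanleySpace]
  congr 1
  ext f
  constructor
  · rintro ⟨e, he, rfl⟩
    refine ⟨_, ⟨squarefreeExponent_le_iff.1 le_self_add, ?_⟩, rfl⟩
    refine Finsupp.support_add.trans (union_subset ?_ fun i hi => ?_)
    · rwa [support_squarefreeExponent]
    · exact he i (Finsupp.mem_support_iff.1 hi)
  · rintro ⟨d, ⟨hSd, hdT⟩, rfl⟩
    refine ⟨d - squarefreeExponent S, fun i hi => hdT ?_, ?_⟩
    · exact Finsupp.support_tsub (Finsupp.mem_support_iff.2 hi)
    · rw [add_tsub_cancel_of_le (squarefreeExponent_le_iff.2 hSd)]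

/-- The Stanley decomposition of a squarefree monomial ideal induced by an interval partition of
the supports of its monomials. -/
noncomputable def IsIntervalPartition.stanleyDecomp (h : IsIntervalPartition s 𝓘)
    (hI : I.restrictScalars K = restrictSupport K {d | d.support ∈ s}) : StanleyDecomp K I :=
  let e : Fin (Nat.card 𝓘) ≃ 𝓘 := (Finite.equivFin 𝓘).symm
  have space_eq (i : Fin (Nat.card 𝓘)) :
      stanleySpace K (squarefreeExponent (e i).1.1) (e i).1.2 =
        restrictSupport K {d | d.support ∈ Set.Icc (e i).1.1 (e i).1.2} :=
    stanleySpace_squarefreeExponent (h.fst_le_snd _ (e i).2)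
  { m := Nat.card 𝓘
    u := fun i => squarefreeExponent (e i).1.1
    Z := fun i => (e i).1.2
    mem := fun i => by
      rw [← Submodule.restrictScalars_mem K, hI, monomial_mem_restrictSupport]
      left
      rw [Set.mem_ofPred_eq, support_squarefreeExponent]
      exact h.Icc_subset _ (e i).2 (Set.left_mem_Icc.2 (h.fst_le_snd _ (e i).2))
    indep := by
      simp only [space_eq]
      refine iSupIndep_restrictSupport fun i j hij => Set.disjoint_left.2 fun d hdi hdj => hij ?_
      exact e.injective (Subtype.ext (h.eq_of_mem_Icc (e i).2 (e j).2 hdi hdj))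
    total := by
      simp only [space_eq]
      rw [iSup_restrictSupport, hI]
      congr 1
      ext d
      rw [Set.mem_iUnion]
      constructor
      · rintro ⟨i, hd⟩
        exact h.Icc_subset _ (e i).2 hd
      · intro hd
        obtain ⟨J, ⟨hJ, hdJ⟩, -⟩ := h.existsUnique _ hd
        exact ⟨e.symm ⟨J, hJ⟩, by rwa [Set.mem_ofPred_eq, e.apply_symm_apply]⟩ }

theorem StanleyDecomp.le_sdepth (hI : I ≠ ⊥) (D : StanleyDecomp K I) (hk : ∀ i, k ≤ #(D.Z i)) :
    k ≤ sdepth I := by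
  refine le_csSup ⟨n, ?_⟩ ⟨D, hk⟩
  rintro l ⟨D', hl⟩
  have : Nonempty (Fin D'.m) := by
    by_contra hempty
    rw [not_nonempty_iff] at hempty
    apply hI
    rw [← Submodule.restrictScalars_eq_bot_iff (S := K), ← D'.total, iSup_of_empty]
  obtain ⟨i⟩ := this
  exact (hl i).trans ((card_le_univ _).trans_eq (Fintype.card_fin n))

theorem IsIntervalPartition.le_sdepth (h : IsIntervalPartition s 𝓘)
    (hI : I.restrictScalars K = restrictSupport K {d | d.support ∈ s}) (hI₀ : I ≠ ⊥)
    (hk : ∀ J ∈ 𝓘, k ≤ #J.2) : k ≤ sdepth I :=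
  (h.stanleyDecomp hI).le_sdepth hI₀ fun _ => hk _ (Subtype.coe_prop _)

end Stanley

section Depth

variable {R M : Type*} [CommRing R] [AddCommGroup M] [Module R M] {f g h : R} {rs : List R}

theorem isWeaklyRegular_pair_iff :
    IsWeaklyRegular M [f, g] ↔
      IsSMulRegular M f ∧ ∀ x y : M, g • x = f • y → ∃ z, x = f • z := by
  rw [← List.singleton_append, isWeaklyRegular_append_iff, isWeaklyRegular_singleton_iff,
    isWeaklyRegular_singleton_iff, isSMulRegular_quotient_iff_mem_of_smul_mem,
    Ideal.ofList_singleton, Submodule.ideal_span_singleton_smul]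
  simp only [Submodule.mem_smul_pointwise_iff_exists, Submodule.mem_top, true_and,
    forall_exists_index, eq_comm]

theorem exists_eq_add_of_isWeaklyRegular (hreg : IsWeaklyRegular M (f :: g :: h :: rs)) {x y z : M}
    (hxyz : h • x = f • y + g • z) : ∃ y' z', x = f • y' + g • z' := by
  have mem_iff (w : M) : w ∈ (Ideal.ofList [f, g] • ⊤ : Submodule R M) ↔
      ∃ y' z', w = f • y' + g • z' := by
    simp [Submodule.sup_smul, Submodule.ideal_span_singleton_smul, Submodule.mem_sup,
      Submodule.mem_smul_pointwise_iff_exists, eq_comm]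
  have hquot := ((isWeaklyRegular_append_iff M [f, g] (h :: rs)).1 hreg).2
  rw [isWeaklyRegular_cons_iff, isSMulRegular_quotient_iff_mem_of_smul_mem] at hquot
  exact (mem_iff x).1 (hquot.1 x ((mem_iff _).2 ⟨y, z, hxyz⟩))

theorem isWeaklyRegular_pair_of_prime [IsDomain R] (hg : Prime g) (hgf : ¬ g ∣ f) :
    IsWeaklyRegular R [f, g] := by
  have hf : f ≠ 0 := by
    rintro rfl
    exact hgf (dvd_zero g)
  refine isWeaklyRegular_pair_iff.2 ⟨IsSMulRegular.of_ne_zero hf, fun x y hxy => ?_⟩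
  obtain ⟨z, rfl⟩ := (hg.dvd_or_dvd (Dvd.intro x hxy)).resolve_left hgf
  exact ⟨z, mul_left_cancel₀ hg.ne_zero (by simpa [mul_left_comm] using hxy)⟩

variable {I J P Q : Ideal R}

theorem isWeaklyRegular_ideal_of_self (hreg : IsWeaklyRegular R [f, g])
    (hfI : ∀ x, f * x ∈ I → x ∈ I) : IsWeaklyRegular I [f, g] := by
  rw [isWeaklyRegular_pair_iff] at hreg ⊢
  refine ⟨hreg.1.submodule I f, fun x y hxy => ?_⟩
  obtain ⟨z, hz⟩ := hreg.2 x y (congrArg Subtype.val hxy)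
  exact ⟨⟨z, hfI z (by rw [← smul_eq_mul, ← hz]; exact x.2)⟩, Subtype.ext hz⟩

theorem top_ne_smul_top_of_ideal [IsDomain R] (hI : I ≠ ⊥) (hfg : I.FG) (hJ : J ≠ ⊤) :
    (⊤ : Submodule R I) ≠ J • ⊤ := by
  intro htop
  obtain ⟨ρ, hρJ, hρ⟩ := Submodule.exists_sub_one_mem_and_smul_eq_zero_of_fg_of_le_smul J
    (⊤ : Submodule R I) ((Submodule.fg_top I).2 hfg) htop.le
  obtain ⟨x, hxI, hx⟩ := Submodule.exists_mem_ne_zero_of_ne_bot hI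
  have hρx : ρ * x = 0 := congrArg Subtype.val (hρ ⟨x, hxI⟩ trivial)
  rw [(mul_eq_zero.1 hρx).resolve_right hx, zero_sub, neg_mem_iff] at hρJ
  exact hJ ((Ideal.eq_top_iff_one J).2 hρJ)

theorem dvd_of_forall_mul_mem_smul_ideal [IsDomain R] [IsIntegrallyClosed R] (hI : I ≠ ⊥)
    (hfg : I.FG) (hf : f ≠ 0) (hgI : ∀ x ∈ I, ∃ z ∈ I, g * x = f * z) : f ∣ g := by
  let N := Submodule.map (Algebra.linearMap R (FractionRing R)) I
  have hf' : algebraMap R (FractionRing R) f ≠ 0 := IsFractionRing.to_map_eq_zero_iff.not.2 hf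
  have hN : N ≠ ⊥ := by
    obtain ⟨x, hxI, hx⟩ := Submodule.exists_mem_ne_zero_of_ne_bot hI
    exact (Submodule.ne_bot_iff N).2
      ⟨_, ⟨x, hxI, rfl⟩, IsFractionRing.to_map_eq_zero_iff.not.2 hx⟩
  have integral : IsIntegral R (algebraMap R (FractionRing R) g / algebraMap R _ f) := by
    refine isIntegral_of_smul_mem_submodule N hN (Submodule.FG.map _ hfg) _ ?_
    rintro _ ⟨x, hx, rfl⟩
    obtain ⟨z, hz, hxz⟩ := hgI x hx
    refine ⟨z, hz, ?_⟩
    rw [Algebra.linearMap_apply, Algebra.linearMap_apply, smul_eq_mul, div_mul_eq_mul_div,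
      ← map_mul, hxz, map_mul, mul_div_cancel_left₀ _ hf']
  obtain ⟨s, hs⟩ := IsIntegrallyClosed.algebraMap_eq_of_integral integral
  refine ⟨s, IsFractionRing.injective R (FractionRing R) ?_⟩
  rw [map_mul, hs, mul_div_cancel₀ _ hf']

theorem isWeaklyRegular_self_of_ideal [IsDomain R] [IsIntegrallyClosed R] (hI : I ≠ ⊥)
    (hfg : I.FG) (hreg : IsWeaklyRegular I [f, g]) : IsWeaklyRegular R [f, g] := by
  rw [isWeaklyRegular_pair_iff] at hreg ⊢
  have hf : f ≠ 0 := by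
    rintro rfl
    obtain ⟨x, hxI, hx⟩ := Submodule.exists_mem_ne_zero_of_ne_bot hI
    have : (⟨x, hxI⟩ : I) = 0 := hreg.1 (by simp)
    exact hx (congrArg Subtype.val this)
  refine ⟨IsSMulRegular.of_ne_zero hf, fun x y hxy => ?_⟩
  refine dvd_of_forall_mul_mem_smul_ideal hI hfg hf fun w hw => ?_
  have hxyw : g • x • (⟨w, hw⟩ : I) = f • y • ⟨w, hw⟩ := by
    rw [smul_smul, smul_smul, ← smul_eq_mul, hxy, smul_eq_mul]
  obtain ⟨z, hz⟩ := hreg.2 _ _ hxyw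
  exact ⟨z, z.2, congrArg Subtype.val hz⟩

theorem mem_of_isWeaklyRegular_ideal (hf : IsSMulRegular R f) (hreg : IsWeaklyRegular I [f, g])
    {x : R} (hfx : f * x ∈ I) (hgx : g * x ∈ I) : x ∈ I := by
  obtain ⟨z, hz⟩ := (isWeaklyRegular_pair_iff.1 hreg).2 ⟨f * x, hfx⟩ ⟨g * x, hgx⟩
    (Subtype.ext (mul_left_comm g f x))
  rw [hf (congrArg Subtype.val hz : f • x = f • (z : R))]
  exact z.2

theorem mem_of_mul_mem_of_isWeaklyRegular_inf (hP : P.IsPrime) (hQP : ¬ Q ≤ P)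
    (hf : IsSMulRegular R f) (hreg : IsWeaklyRegular ↥(P ⊓ Q) [f, g]) {s : R}
    (hfs : f * s ∈ P) (hgs : g * s ∈ P) : s ∈ P := by
  obtain ⟨x, hxQ, hxP⟩ := SetLike.not_le_iff_exists.1 hQP
  have mem_inf {a : R} (has : a * s ∈ P) : a * (s * x) ∈ P ⊓ Q := by
    rw [← mul_assoc]
    exact ⟨P.mul_mem_right x has, Q.mul_mem_left _ hxQ⟩
  have hsx := mem_of_isWeaklyRegular_ideal hf hreg (mem_inf hfs) (mem_inf hgs)
  exact (hP.mem_or_mem hsx.1).resolve_right hxP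

/-- With `fᵢ = pᵢ + qᵢ`, the element `f₁ q₂ - f₂ q₁ = p₁ q₂ - p₂ q₁` lies in `P ⊓ Q`, and the
expansion of the vanishing determinant with rows `f`, `f`, `q` writes `f₃` times it as a
combination of `f₁` and `f₂`. -/
theorem exists_relation_of_isWeaklyRegular_inf {p₁ p₂ p₃ q₁ q₂ q₃ : R} (hp₁ : p₁ ∈ P)
    (hp₂ : p₂ ∈ P) (hp₃ : p₃ ∈ P) (hq₁ : q₁ ∈ Q) (hq₂ : q₂ ∈ Q) (hq₃ : q₃ ∈ Q)
    (hreg : IsWeaklyRegular ↥(P ⊓ Q) ((p₁ + q₁) :: (p₂ + q₂) :: (p₃ + q₃) :: rs)) :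
    ∃ t₁ ∈ P ⊓ Q, ∃ t₂ ∈ P ⊓ Q, (p₂ + q₂) * (q₁ + t₁) = (p₁ + q₁) * (q₂ + t₂) := by
  have minor_mem {p q p' q' : R} (hp : p ∈ P) (hq : q ∈ Q) (hp' : p' ∈ P) (hq' : q' ∈ Q) :
      p * q' - p' * q ∈ P ⊓ Q :=
    ⟨sub_mem (P.mul_mem_right _ hp) (P.mul_mem_right _ hp'),
      sub_mem (Q.mul_mem_left _ hq') (Q.mul_mem_left _ hq)⟩
  obtain ⟨t₂, t₁, ht⟩ := exists_eq_add_of_isWeaklyRegular hreg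
    (x := ⟨_, minor_mem hp₁ hq₁ hp₂ hq₂⟩) (y := ⟨_, minor_mem hp₃ hq₃ hp₂ hq₂⟩)
    (z := ⟨_, minor_mem hp₁ hq₁ hp₃ hq₃⟩)
    (Subtype.ext (by simp only [Submodule.coe_add, Submodule.coe_smul, smul_eq_mul]; ring))
  have ht' : p₁ * q₂ - p₂ * q₁ = (p₁ + q₁) * t₂ + (p₂ + q₂) * t₁ := congrArg Subtype.val ht
  exact ⟨t₁, t₁.2, -t₂, neg_mem t₂.2, by linear_combination -ht'⟩

variable [IsDomain R]

theorem inf_ne_bot_of_not_le (hPQ : ¬ P ≤ Q) (hQP : ¬ Q ≤ P) : P ⊓ Q ≠ ⊥ :=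
  Ideal.inf_ne_bot_of_ne_bot (fun h => hPQ (h ▸ bot_le)) fun h => hQP (h ▸ bot_le)

theorem isRegular_inf_of_isWeaklyRegular_self (hP : P.IsPrime) (hQ : Q.IsPrime) (hPQ : ¬ P ≤ Q)
    (hQP : ¬ Q ≤ P) (hfg : (P ⊓ Q).FG) (htop : P ⊔ Q ≠ ⊤) (hf : f ∈ P ⊔ Q) (hg : g ∈ P ⊔ Q)
    (hfP : f ∉ P) (hfQ : f ∉ Q) (hreg : IsWeaklyRegular R [f, g]) :
    IsRegular ↥(P ⊓ Q) [f, g] where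
  toIsWeaklyRegular := isWeaklyRegular_ideal_of_self hreg fun _ hx =>
    ⟨(hP.mem_or_mem hx.1).resolve_left hfP, (hQ.mem_or_mem hx.2).resolve_left hfQ⟩
  top_ne_smul := by
    refine top_ne_smul_top_of_ideal (inf_ne_bot_of_not_le hPQ hQP) hfg ?_
    exact ne_top_of_le_ne_top htop (Ideal.span_le.2 (by simp [Set.subset_def, hf, hg]))

variable [IsIntegrallyClosed R]

theorem sup_eq_top_of_isWeaklyRegular_inf (hP : P.IsPrime) (hQ : Q.IsPrime) (hPQ : ¬ P ≤ Q)
    (hQP : ¬ Q ≤ P) (hfg : (P ⊓ Q).FG) (hrs : ∀ a ∈ [f, g, h], a ∈ P ⊔ Q)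
    (hreg : IsWeaklyRegular ↥(P ⊓ Q) (f :: g :: h :: rs)) : P ⊔ Q = ⊤ := by
  have hpair : IsWeaklyRegular ↥(P ⊓ Q) [f, g] :=
    ((isWeaklyRegular_append_iff _ [f, g] (h :: rs)).1 hreg).1
  obtain ⟨hf, hdvd⟩ := isWeaklyRegular_pair_iff.1
    (isWeaklyRegular_self_of_ideal (inf_ne_bot_of_not_le hPQ hQP) hfg hpair)
  simp only [List.forall_mem_cons, Submodule.mem_sup] at hrs
  obtain ⟨⟨p₁, hp₁, q₁, hq₁, rfl⟩, ⟨p₂, hp₂, q₂, hq₂, rfl⟩, ⟨p₃, hp₃, q₃, hq₃, rfl⟩, -⟩ := hrs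
  obtain ⟨t₁, ht₁, t₂, ht₂, ht⟩ :=
    exists_relation_of_isWeaklyRegular_inf hp₁ hp₂ hp₃ hq₁ hq₂ hq₃ hreg
  obtain ⟨s, hs₁ : q₁ + t₁ = (p₁ + q₁) * s⟩ := hdvd _ _ ht
  have hs₂ : q₂ + t₂ = (p₂ + q₂) * s := by
    refine hf ?_
    simp only [smul_eq_mul]
    linear_combination (p₂ + q₂) * hs₁ - ht
  have hsQ : s ∈ Q := by
    refine mem_of_mul_mem_of_isWeaklyRegular_inf hQ hPQ hf (inf_comm P Q ▸ hpair) ?_ ?_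
    · exact hs₁ ▸ add_mem hq₁ ht₁.2
    · exact hs₂ ▸ add_mem hq₂ ht₂.2
  have hsP : 1 - s ∈ P := by
    refine mem_of_mul_mem_of_isWeaklyRegular_inf hP hQP hf hpair ?_ ?_
    · rw [show (p₁ + q₁) * (1 - s) = p₁ - t₁ by linear_combination hs₁]
      exact sub_mem hp₁ ht₁.1
    · rw [show (p₂ + q₂) * (1 - s) = p₂ - t₂ by linear_combination hs₂]
      exact sub_mem hp₂ ht₂.1
  exact (Ideal.eq_top_iff_one _).2 (sub_add_cancel 1 s ▸ Submodule.add_mem_sup hsP hsQ)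

theorem moduleDepth_inf_eq_two (hP : P.IsPrime) (hQ : Q.IsPrime) (hPQ : ¬ P ≤ Q)
    (hQP : ¬ Q ≤ P) (hfg : (P ⊓ Q).FG) (htop : P ⊔ Q ≠ ⊤) (hf : f ∈ P ⊔ Q) (hg : g ∈ P ⊔ Q)
    (hfP : f ∉ P) (hfQ : f ∉ Q) (hreg : IsWeaklyRegular R [f, g]) :
    moduleDepth R (P ⊔ Q) ↥(P ⊓ Q) = 2 := by
  refine IsGreatest.csSup_eq ⟨⟨[f, g], rfl, by simp [hf, hg], ?_⟩, ?_⟩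
  · exact isRegular_inf_of_isWeaklyRegular_self hP hQ hPQ hQP hfg htop hf hg hfP hfQ hreg
  · rintro _ ⟨rs, rfl, hrs, hreg'⟩
    match rs with
    | [] | [_] | [_, _] => simp
    | f' :: g' :: h' :: rs' =>
      exact absurd (sup_eq_top_of_isWeaklyRegular_inf hP hQ hPQ hQP hfg
        (fun a ha => hrs a (List.mem_append_left rs' ha)) hreg'.toIsWeaklyRegular) htop

end Depth

section MonomialPrimes

theorem isPrime_span_X_image {σ R : Type*} [CommRing R] [IsDomain R] (s : Set σ) :
    (Ideal.span (X '' s) : Ideal (MvPolynomial σ R)).IsPrime := by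
  classical
  let ev : MvPolynomial σ R →ₐ[R] MvPolynomial σ R := aeval fun i => if i ∈ s then 0 else X i
  have mk_comp_ev : (Ideal.Quotient.mkₐ R (Ideal.span (X '' s))).comp ev =
      Ideal.Quotient.mkₐ R (Ideal.span (X '' s)) := by
    refine algHom_ext fun i => ?_
    by_cases hi : i ∈ s
    · have hX : (X i : MvPolynomial σ R) ∈ Ideal.span (X '' s) :=
        Ideal.subset_span (Set.mem_image_of_mem X hi)
      simpa [ev, hi] using (Ideal.Quotient.eq_zero_iff_mem.2 hX).symm
    · simp [ev, hi]
  have ker_ev : RingHom.ker ev = Ideal.span (X '' s) := by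
    refine le_antisymm (fun p hp => ?_) (Ideal.span_le.2 ?_)
    · rw [← Ideal.Quotient.eq_zero_iff_mem, ← Ideal.Quotient.mkₐ_eq_mk R,
        ← DFunLike.congr_fun mk_comp_ev p, AlgHom.comp_apply, RingHom.mem_ker.1 hp, map_zero]
    · rintro _ ⟨i, hi, rfl⟩
      simp [ev, RingHom.mem_ker, hi]
  exact ker_ev ▸ RingHom.ker_isPrime ev

variable {n : ℕ} {K : Type*} [Field K] {A B : Finset (Fin n)}

theorem isPrime_varIdeal (A : Finset (Fin n)) : (varIdeal K A).IsPrime :=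
  isPrime_span_X_image _

theorem mem_varIdeal_iff {f : MvPolynomial (Fin n) K} :
    f ∈ varIdeal K A ↔ ∀ d ∈ f.support, ∃ i ∈ d.support, i ∈ A := by
  simp only [varIdeal, mem_ideal_span_X_image, Finsupp.mem_support_iff, mem_coe, and_comm]

theorem X_mem_varIdeal_iff {i : Fin n} : (X i : MvPolynomial (Fin n) K) ∈ varIdeal K A ↔ i ∈ A := by
  simp [mem_varIdeal_iff, support_X, Finsupp.single_apply]

theorem varIdeal_union (A B : Finset (Fin n)) :
    varIdeal K (A ∪ B) = varIdeal K A ⊔ varIdeal K B := by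
  simp only [varIdeal, coe_union, Set.image_union, Ideal.span_union]

theorem varIdeal_le_iff : varIdeal K A ≤ varIdeal K B ↔ A ⊆ B := by
  refine ⟨fun h i hi => X_mem_varIdeal_iff.1 (h (X_mem_varIdeal_iff.2 hi)), fun h => ?_⟩
  exact Ideal.span_mono (Set.image_mono h)

theorem moduleDepth_varIdeal_inf (hAB : ¬ A ⊆ B) (hBA : ¬ B ⊆ A) :
    moduleDepth (MvPolynomial (Fin n) K) (varIdeal K (A ∪ B)) ↥(varIdeal K A ⊓ varIdeal K B) =
      2 := by
  obtain ⟨a, haA, haB⟩ := not_subset.1 hAB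
  obtain ⟨b, hbB, hbA⟩ := not_subset.1 hBA
  have hXa : (X a : MvPolynomial (Fin n) K) ∈ varIdeal K A := X_mem_varIdeal_iff.2 haA
  have hXb : (X b : MvPolynomial (Fin n) K) ∈ varIdeal K B := X_mem_varIdeal_iff.2 hbB
  have add_notMem_left : (X a + X b : MvPolynomial (Fin n) K) ∉ varIdeal K A := fun h =>
    hbA (X_mem_varIdeal_iff.1 ((add_mem_cancel_left hXa).1 h))
  have add_notMem_right : (X a + X b : MvPolynomial (Fin n) K) ∉ varIdeal K B := fun h =>
    haB (X_mem_varIdeal_iff.1 ((add_mem_cancel_right hXb).1 h))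
  rw [varIdeal_union]
  refine moduleDepth_inf_eq_two (f := X a + X b) (g := X a) (isPrime_varIdeal A)
    (isPrime_varIdeal B) (varIdeal_le_iff.not.2 hAB) (varIdeal_le_iff.not.2 hBA)
    (IsNoetherian.noetherian _) ?_ (Submodule.add_mem_sup hXa hXb) (Submodule.mem_sup_left hXa)
    add_notMem_left add_notMem_right (isWeaklyRegular_pair_of_prime X_prime fun h => ?_)
  · exact varIdeal_union (K := K) A B ▸ (isPrime_varIdeal _).ne_top
  · exact add_notMem_left (Ideal.mem_of_dvd _ h hXa)

theorem restrictScalars_varIdeal_inf_compl (A : Finset (Fin n)) :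
    (varIdeal K A ⊓ varIdeal K Aᶜ).restrictScalars K = restrictSupport K
      {d | d.support ∈ {S : Finset (Fin n) | (∃ i ∈ S, i ∈ A) ∧ ∃ i ∈ S, i ∉ A}} := by
  ext f
  simp only [Submodule.restrictScalars_mem, Submodule.mem_inf, mem_varIdeal_iff, mem_compl,
    mem_restrictSupport_iff, Set.subset_def, mem_coe, Set.mem_ofPred_eq, forall₂_and]

theorem le_sdepth_varIdeal_inf_compl (hA : A ≠ ∅) (hA' : A ≠ univ) :
    (#A + 1) / 2 + (#Aᶜ + 1) / 2 ≤ sdepth (varIdeal K A ⊓ varIdeal K Aᶜ) := by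
  obtain ⟨𝓘, h𝓘, hcard⟩ := exists_isIntervalPartition_meets_both A
  refine h𝓘.le_sdepth (restrictScalars_varIdeal_inf_compl A) ?_ hcard
  exact inf_ne_bot_of_not_le (varIdeal_le_iff.not.2 (le_compl_self.not.2 hA))
    (varIdeal_le_iff.not.2 (compl_le_self.not.2 hA'))

end MonomialPrimes

/-- for monomial primes `P`, `Q` generated by disjoint sets of
variables with `P + Q = (x₁,…,xₙ)` and `ht P = r` (so `1 ≤ r < n`),
`depth (P ∩ Q) = 2` and `sdepth (P ∩ Q) ≥ ⌈r/2⌉ + ⌈(n−r)/2⌉ ≥ 2`. -/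
theorem depth_sdepth_two_disjoint_primes {K : Type*} [Field K] (n r : ℕ)
    (A B : Finset (Fin n)) (hd : Disjoint A B) (hu : A ∪ B = Finset.univ)
    (hA : A.card = r) (h1 : 1 ≤ r) (h2 : r < n) :
    moduleDepth (MvPolynomial (Fin n) K) (maxIdeal n K)
        ↥(varIdeal K A ⊓ varIdeal K B) = 2 ∧
      sdepth (varIdeal K A ⊓ varIdeal K B) ≥ (r + 1) / 2 + (n - r + 1) / 2 ∧
      (r + 1) / 2 + (n - r + 1) / 2 ≥ 2 := by
  obtain rfl : Aᶜ = B := IsCompl.compl_eq ⟨hd, codisjoint_iff.2 hu⟩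
  have ne_empty : A ≠ ∅ := (card_pos.1 (hA ▸ h1)).ne_empty
  have ne_univ : A ≠ univ := (card_lt_iff_ne_univ A).1 (by rwa [hA, Fintype.card_fin])
  refine ⟨?_, ?_, by omega⟩
  · rw [maxIdeal, ← hu]
    exact moduleDepth_varIdeal_inf (le_compl_self.not.2 ne_empty) (compl_le_self.not.2 ne_univ)
  · have card_compl_eq : #Aᶜ = n - r := by rw [card_compl, Fintype.card_fin, hA]
    rw [← card_compl_eq, ← hA]
    exact le_sdepth_varIdeal_inf_compl ne_empty ne_univ
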